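/- Let u be a fuzzy number with only finitely many points of discontinuity in [u]₀. Then there exists a sequence (v_n) of differentiable fuzzy numbers (smoothers) such that u ∇ v_n is a differentiable fuzzy number for every n, and d_∞(u ∇ v_n, u) → 0 as n → ∞. -/

import Mathlib

open Set Filter Topology

structure FuzzyNumber where
  u : ℝ → ℝ
  mem_unit : ∀ x, u x ∈ Set.Icc (0:ℝ) 1
  lo : ℝ → ℝ
  hi : ℝ → ℝ
  cut_eq : ∀ α ∈ Set.Ioc (0:ℝ) 1, {x | α ≤ u x} = Set.Icc (lo α) (hi α)
  cut0_eq : closure {x | 0 < u x} = Set.Icc (lo 0) (hi 0)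
  one_cut_nonempty : ∃ x, 1 ≤ u x

noncomputable def dInf (u v : FuzzyNumber) : ℝ :=
  ⨆ α : Set.Icc (0:ℝ) 1, max |u.lo α - v.lo α| |u.hi α - v.hi α|

noncomputable def conv (u v : ℝ → ℝ) (x : ℝ) : ℝ :=
  ⨆ y : ℝ, min (u y) (v (x - y))

noncomputable def wp (p x : ℝ) : ℝ :=
  if x ∈ Set.Icc (-p) p then 1 - (x / p) ^ 2 else 0

def FuzzyNumber.IsDifferentiable (v : FuzzyNumber) : Prop :=
  ∀ x ∈ Set.Ioo (v.lo 0) (v.hi 0), DifferentiableAt ℝ v.u x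

/-!
The cuts of `u ∇ v` have the endpoints `u.lo + v.lo` and `u.hi + v.hi`, and its membership function
is the minimum of the generalised inverses of `u.lo + v.lo` and `-(u.hi + v.hi)`. Both endpoints of
`u` are monotone in the level, hence differentiable off a null set of levels, to which the level `1`
is added. Zahorski's theorem provides a continuous function `ρ`, of slope at least `c > 0`, which
has an infinite derivative on this null set and everywhere has a finite or an infinite derivative.
Take for `v` the fuzzy number with cuts `[ρ a, -ρ a]`. The inverse of `u.lo + ρ` is then
differentiable: it is flat where `ρ` has infinite slope, and elsewhere `u.lo + ρ` has a finite
positive slope. The two branches of `u ∇ v` are both flat at level `1`, so they fit together there.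
Scaling `ρ` makes `d_∞(u ∇ v, u)` arbitrarily small.

Zahorski's function is the identity plus a series of primitives of weights that are continuous in
the density topology, hence derivatives of their primitives. The weights come from the
Lusin–Menchoff theorem by Urysohn's construction, along an increasing sequence of closed sets
that avoids the given null set and whose union has null complement.
-/

open MeasureTheory Metric Asymptotics

section ClosedApproximation

lemma tsum_ofReal_mul_half_pow_succ {c : ℝ} (hc : 0 ≤ c) :
    ∑' k : ℕ, ENNReal.ofReal (c * (1 / 2) ^ (k + 1)) = ENNReal.ofReal c := by
  have hsum : HasSum (fun k : ℕ ↦ c * (1 / 2 : ℝ) ^ (k + 1)) c := by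
    have hgeom := hasSum_geometric_two.mul_left (c / 2)
    rw [div_mul_cancel₀ c two_ne_zero] at hgeom
    exact hgeom.congr_fun fun k ↦ by ring
  rw [← ENNReal.ofReal_tsum_of_nonneg (fun k ↦ by positivity) hsum.summable, hsum.tsum_eq]

lemma measure_sdiff_iInter_le {X : Type*} [MeasurableSpace X] {μ : Measure X} {S A : Set X}
    {F : ℕ → Set X} {b : ℝ} (hb : 0 ≤ b)
    (h : ∀ k, μ ((S ∩ A) \ F k) ≤ ENNReal.ofReal (b * (1 / 2) ^ (k + 1))) :
    μ (S \ ⋂ k, F k) ≤ μ (S \ A) + ENNReal.ofReal b := by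
  have hcover : S \ ⋂ k, F k ⊆ (S \ A) ∪ ⋃ k, (S ∩ A) \ F k := by
    intro y
    simp only [Set.mem_sdiff, mem_iInter, mem_union, mem_iUnion, mem_inter_iff, not_forall]
    tauto
  calc μ (S \ ⋂ k, F k) ≤ μ (S \ A) + ∑' k, μ ((S ∩ A) \ F k) :=
        (measure_mono hcover).trans <| (measure_union_le _ _).trans <| by
          gcongr; exact measure_iUnion_le _
    _ ≤ μ (S \ A) + ∑' k : ℕ, ENNReal.ofReal (b * (1 / 2) ^ (k + 1)) := by
        gcongr with k; exact h k
    _ = μ (S \ A) + ENNReal.ofReal b := by rw [tsum_ofReal_mul_half_pow_succ hb]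

lemma iInter_compl_union_cthickening_subset {X : Type*} [PseudoMetricSpace X] {C A : Set X}
    (hC : IsClosed C) {O : ℕ → Set X} (hAO : ∀ k, Aᶜ ⊆ O k) {δ : ℕ → ℝ}
    (hδ : Tendsto δ atTop (𝓝 0)) : ⋂ k, ((O k)ᶜ ∪ cthickening (δ k) C) ⊆ C ∪ A := by
  intro y hy
  by_contra hyCA
  obtain ⟨hyC, hyA⟩ := not_or.1 hyCA
  rw [← hC.closure_eq, closure_eq_iInter_cthickening] at hyC
  refine hyC (mem_iInter₂.2 fun ε hε ↦ ?_)
  obtain ⟨k, hk⟩ := (hδ.eventually (gt_mem_nhds hε)).exists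
  exact cthickening_mono hk.le C ((mem_iInter.1 hy k).resolve_left (not_not.2 (hAO k hyA)))

/-- The closed set approximating `A` from inside keeps the scale-`2⁻ᵏ` neighbourhood of `C` except
for a part of measure `O(8⁻ᵏ)`, so its deficiency in balls of radius `r` about `C` is `O(r²)`. -/
lemma exists_isClosed_subset_union_measure_closedBall_sdiff_le {X : Type*}
    [PseudoMetricSpace X] [MeasurableSpace X] {μ : Measure X} [μ.OuterRegular] {C A : Set X}
    (hC : IsClosed C) (hA : MeasurableSet A) (hAfin : μ Aᶜ ≠ ⊤) {ε : ℝ} (hε : 0 < ε) :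
    ∃ Q, IsClosed Q ∧ C ⊆ Q ∧ Q ⊆ C ∪ A ∧ μ Qᶜ ≤ μ Aᶜ + ENNReal.ofReal ε ∧
      ∀ x ∈ C, ∀ r > 0,
        μ (closedBall x r \ Q) ≤ μ (closedBall x r \ A) + ENNReal.ofReal (ε * r ^ 2) := by
  have hopen (k : ℕ) : ∃ O, Aᶜ ⊆ O ∧ IsOpen O ∧
      μ (O \ Aᶜ) < ENNReal.ofReal (ε * (1 / 2) ^ (k + 1) * ((1 / 2) ^ (k + 1)) ^ 2) := by
    have hpos : 0 < ε * (1 / 2) ^ (k + 1) * ((1 / 2) ^ (k + 1)) ^ 2 := by positivity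
    obtain ⟨O, hAO, hO, -, hlt⟩ :=
      hA.compl.exists_isOpen_sdiff_lt hAfin (ENNReal.ofReal_pos.2 hpos).ne'
    exact ⟨O, hAO, hO, hlt⟩
  choose O hAO hO hOlt using hopen
  have hscale : Tendsto (fun k : ℕ ↦ (1 / 2 : ℝ) ^ (k + 1)) atTop (𝓝 0) :=
    (tendsto_pow_atTop_nhds_zero_of_lt_one (by norm_num) (by norm_num)).comp
      (tendsto_add_atTop_nat 1)
  set F : ℕ → Set X := fun k ↦ (O k)ᶜ ∪ cthickening ((1 / 2) ^ (k + 1)) C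
  have hdeficiency (k : ℕ) {S : Set X} {t : ℝ} (ht : (1 / 2 : ℝ) ^ (k + 1) ≤ t) :
      μ ((S ∩ A) \ F k) ≤ ENNReal.ofReal (ε * t ^ 2 * (1 / 2) ^ (k + 1)) := by
    have hsub : (S ∩ A) \ F k ⊆ O k \ Aᶜ := by
      rintro y ⟨⟨-, hyA⟩, hyF⟩
      exact ⟨by_contra fun h ↦ hyF (Or.inl h), not_not.2 hyA⟩
    refine ((measure_mono hsub).trans (hOlt k).le).trans (ENNReal.ofReal_le_ofReal ?_)
    calc ε * (1 / 2) ^ (k + 1) * ((1 / 2) ^ (k + 1)) ^ 2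
        ≤ ε * (1 / 2) ^ (k + 1) * t ^ 2 := by gcongr
      _ = ε * t ^ 2 * (1 / 2) ^ (k + 1) := by ring
  refine ⟨⋂ k, F k, isClosed_iInter fun k ↦ (hO k).isClosed_compl.union isClosed_cthickening,
    subset_iInter fun k ↦ (self_subset_cthickening C).trans subset_union_right,
    iInter_compl_union_cthickening_subset hC hAO hscale, ?_, ?_⟩
  · rw [compl_eq_univ_sdiff, compl_eq_univ_sdiff A]
    exact measure_sdiff_iInter_le hε.le fun k ↦ by
      simpa using hdeficiency k (S := univ)
        (pow_le_one₀ (by norm_num) (by norm_num : (1 / 2 : ℝ) ≤ 1))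
  · intro x hx r hr
    refine measure_sdiff_iInter_le (by positivity) fun k ↦ ?_
    rcases le_total ((1 / 2 : ℝ) ^ (k + 1)) r with hkr | hrk
    · exact hdeficiency k hkr
    · have hempty : (closedBall x r ∩ A) \ F k = ∅ :=
        sdiff_eq_empty.2 <| inter_subset_left.trans <| (closedBall_subset_closedBall hrk).trans <|
          (closedBall_subset_cthickening hx _).trans subset_union_right
      simp [hempty]

end ClosedApproximation

section DensityTopology

/-- The filter of sets with Lebesgue density one at `x`, phrased as: the complement has outer
measure `o(r)` in the ball of radius `r`. -/
noncomputable def densityNhds (x : ℝ) : Filter ℝ where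
  sets := {S | (fun r ↦ volume.real (closedBall x r \ S)) =o[𝓝[>] 0] fun r : ℝ ↦ r}
  univ_sets := by simp
  sets_of_superset {S T} hS hST := by
    refine IsBigO.trans_isLittleO (IsBigO.of_bound' (Eventually.of_forall fun r ↦ ?_)) hS
    simp only [Real.norm_of_nonneg measureReal_nonneg]
    exact measureReal_mono (sdiff_subset_sdiff_right hST)
      (measure_ne_top_of_subset sdiff_subset (measure_closedBall_lt_top (μ := volume)).ne)
  inter_sets {S T} hS hT := by
    refine IsBigO.trans_isLittleO (IsBigO.of_bound' (Eventually.of_forall fun r ↦ ?_)) (hS.add hT)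
    rw [Real.norm_of_nonneg measureReal_nonneg,
      Real.norm_of_nonneg (add_nonneg measureReal_nonneg measureReal_nonneg), sdiff_inter]
    exact measureReal_union_le _ _

lemma mem_densityNhds {x : ℝ} {S : Set ℝ} :
    S ∈ densityNhds x ↔ (fun r ↦ volume.real (closedBall x r \ S)) =o[𝓝[>] 0] fun r : ℝ ↦ r :=
  Iff.rfl

lemma densityNhds_le_nhds (x : ℝ) : densityNhds x ≤ 𝓝 x := by
  intro S hS
  obtain ⟨δ, hδ, hball⟩ := nhds_basis_closedBall.mem_iff.1 hS
  refine mem_densityNhds.2 ((isLittleO_zero _ _).congr' ?_ EventuallyEq.rfl)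
  filter_upwards [Ioc_mem_nhdsGT hδ] with r hr
  rw [sdiff_eq_empty.2 ((closedBall_subset_closedBall hr.2).trans hball), measureReal_empty]

lemma mem_densityNhds_congr_ae {x : ℝ} {S T : Set ℝ} (h : S =ᵐ[volume] T) :
    S ∈ densityNhds x ↔ T ∈ densityNhds x := by
  have heq (r : ℝ) : volume.real (closedBall x r \ S) = volume.real (closedBall x r \ T) :=
    measureReal_congr (ae_eq_set_sdiff ae_eq_rfl h)
  simp only [mem_densityNhds, heq]

lemma mem_densityNhds_of_measure_sdiff_le {x c : ℝ} {Q A : Set ℝ} (hc : 0 ≤ c)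
    (hA : A ∈ densityNhds x)
    (h : ∀ r > 0, volume (closedBall x r \ Q) ≤
      volume (closedBall x r \ A) + ENNReal.ofReal (c * r ^ 2)) :
    Q ∈ densityNhds x := by
  have hsq : (fun r : ℝ ↦ c * r ^ 2) =o[𝓝[>] 0] fun r : ℝ ↦ r :=
    ((isLittleO_pow_id one_lt_two).const_mul_left c).mono nhdsWithin_le_nhds
  refine IsBigO.trans_isLittleO (IsBigO.of_bound' ?_) ((mem_densityNhds.1 hA).add hsq)
  filter_upwards [self_mem_nhdsWithin] with r hr
  have hfin : volume (closedBall x r \ A) ≠ ⊤ :=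
    measure_ne_top_of_subset sdiff_subset measure_closedBall_lt_top.ne
  have hreal := ENNReal.toReal_mono (ENNReal.add_ne_top.2 ⟨hfin, ENNReal.ofReal_ne_top⟩) (h r hr)
  rw [ENNReal.toReal_add hfin ENNReal.ofReal_ne_top, ENNReal.toReal_ofReal (by positivity)]
    at hreal
  rw [Real.norm_of_nonneg measureReal_nonneg,
    Real.norm_of_nonneg (add_nonneg measureReal_nonneg (by positivity))]
  exact hreal

lemma mem_densityNhds_of_measure_sdiff_le_sq {x c : ℝ} {Q : Set ℝ} (hc : 0 ≤ c)
    (h : ∀ r > 0, volume (closedBall x r \ Q) ≤ ENNReal.ofReal (c * r ^ 2)) :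
    Q ∈ densityNhds x :=
  mem_densityNhds_of_measure_sdiff_le hc univ_mem fun r hr ↦ by simpa using h r hr

lemma ae_mem_densityNhds {S : Set ℝ} (hS : MeasurableSet S) :
    ∀ᵐ x, x ∈ S → S ∈ densityNhds x := by
  filter_upwards [Besicovitch.ae_tendsto_measure_inter_div_of_measurableSet volume hS.compl]
    with x hx hxS
  rw [indicator_of_notMem (not_not.2 hxS)] at hx
  have hreal := (ENNReal.tendsto_toReal ENNReal.zero_ne_top).comp hx
  have hlittleO : (fun r ↦ volume.real (closedBall x r \ S)) =o[𝓝[>] 0] fun r : ℝ ↦ 2 * r := by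
    refine (isLittleO_iff_tendsto' ?_).2 (hreal.congr' ?_)
    · filter_upwards [self_mem_nhdsWithin] with r (hr : 0 < r) h0
      linarith
    · filter_upwards [self_mem_nhdsWithin] with r (hr : 0 < r)
      rw [Function.comp_apply, ENNReal.toReal_div, Real.volume_closedBall,
        ENNReal.toReal_ofReal (by positivity), inter_comm, ← sdiff_eq, Measure.real]
  exact (isLittleO_const_mul_right_iff two_ne_zero).1 hlittleO

/-- The density topology on `ℝ`, a refinement of the Euclidean topology whose bounded continuous
functions are the derivatives of their primitives. -/
noncomputable abbrev densityTopology : TopologicalSpace ℝ := TopologicalSpace.mkOfNhds densityNhds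

lemma densityTopology_le : densityTopology ≤ UniformSpace.toTopologicalSpace :=
  fun _ hG x hx ↦ densityNhds_le_nhds x (IsOpen.mem_nhds hG hx)

lemma densityNhds_le_nhds_densityTopology (x : ℝ) : densityNhds x ≤ @nhds ℝ densityTopology x := by
  intro S hS
  obtain ⟨G, hGS, hG, hxG⟩ := (@_root_.mem_nhds_iff ℝ densityTopology x S).1 hS
  exact mem_of_superset (hG x hxG) hGS

/-- The points of `S` at which `S` has density one; for measurable `S` this is the interior of `S`
in the density topology. -/
def densityInterior (S : Set ℝ) : Set ℝ := {x ∈ S | S ∈ densityNhds x}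

lemma densityInterior_subset (S : Set ℝ) : densityInterior S ⊆ S := fun _ hx ↦ hx.1

lemma densityInterior_ae_eq {S : Set ℝ} (hS : MeasurableSet S) :
    densityInterior S =ᵐ[volume] S := by
  filter_upwards [ae_mem_densityNhds hS] with x hx
  exact propext ⟨fun h ↦ h.1, fun h ↦ ⟨h, hx h⟩⟩

lemma isOpen_densityInterior {S : Set ℝ} (hS : MeasurableSet S) :
    IsOpen[densityTopology] (densityInterior S) :=
  fun _ hx ↦ (mem_densityNhds_congr_ae (densityInterior_ae_eq hS)).2 hx.2

/-- The **Lusin–Menchoff theorem**. -/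
lemma exists_isClosed_subset_densityInterior {C U : Set ℝ} (hC : IsClosed C)
    (hU : NullMeasurableSet U) (hUfin : volume Uᶜ ≠ ⊤) (hCU : C ⊆ densityInterior U) :
    ∃ Q, IsClosed Q ∧ C ⊆ densityInterior Q ∧ Q ⊆ U ∧ volume Qᶜ ≠ ⊤ := by
  obtain ⟨A, hAU, hA, hAeq⟩ := hU.exists_measurable_subset_ae_eq
  have hAfin : volume Aᶜ ≠ ⊤ := by rwa [measure_congr (EventuallyEq.compl hAeq)]
  obtain ⟨Q, hQ, hCQ, hQsub, hQvol, hQball⟩ :=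
    exists_isClosed_subset_union_measure_closedBall_sdiff_le hC hA hAfin one_pos
  refine ⟨Q, hQ, fun x hx ↦ ⟨hCQ hx, ?_⟩,
    hQsub.trans (union_subset (hCU.trans (densityInterior_subset U)) hAU),
    ne_top_of_le_ne_top (ENNReal.add_ne_top.2 ⟨hAfin, ENNReal.ofReal_ne_top⟩) hQvol⟩
  exact mem_densityNhds_of_measure_sdiff_le zero_le_one
    ((mem_densityNhds_congr_ae hAeq).2 (hCU hx).2) (hQball x hx)

end DensityTopology

section Urysohn

lemma aemeasurable_urysohnsCU_lim {X : Type*} [TopologicalSpace X] [MeasurableSpace X]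
    {μ : Measure X} {P : Set X → Set X → Prop} (hP : ∀ c u, P c u → NullMeasurableSet u μ)
    (c : Urysohns.CU P) : AEMeasurable c.lim μ := by
  have happrox (n : ℕ) : ∀ c : Urysohns.CU P, AEMeasurable (c.approx n) μ := by
    induction n with
    | zero => exact fun c ↦ aemeasurable_one.indicator₀ (hP _ _ c.P_C_U).compl
    | succ n ih =>
      intro c
      simp only [Urysohns.CU.approx, midpoint_eq_smul_add, smul_eq_mul]
      exact ((ih c.left).add (ih c.right)).const_mul _
  exact aemeasurable_of_tendsto_metrizable_ae atTop (fun n ↦ happrox n c)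
    (Eventually.of_forall c.tendsto_approx_atTop)

lemma exists_continuous_densityTopology_zero_one {C U : Set ℝ} (hC : IsClosed C)
    (hU : IsOpen[densityTopology] U) (hUmeas : NullMeasurableSet U) (hUfin : volume Uᶜ ≠ ⊤)
    (hCU : C ⊆ U) :
    ∃ w : ℝ → ℝ, Continuous[densityTopology, _] w ∧ AEMeasurable w ∧ (∀ x, w x ∈ Icc 0 1) ∧
      EqOn w 0 C ∧ EqOn w 1 Uᶜ := by
  let P : Set ℝ → Set ℝ → Prop := fun c u ↦
    NullMeasurableSet u ∧ volume uᶜ ≠ ⊤ ∧ ∃ F, IsClosed F ∧ c ⊆ F ∧ F ⊆ u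
  let c : @Urysohns.CU ℝ densityTopology P := @Urysohns.CU.mk ℝ densityTopology P C U
    ⟨hUmeas, hUfin, C, hC, Subset.rfl, hCU⟩ (hC.mono densityTopology_le) hU hCU <| by
      rintro c u - ⟨humeas, hufin, F, hF, hcF, hFu⟩ hu -
      obtain ⟨Q, hQ, hFQ, hQu, hQfin⟩ := exists_isClosed_subset_densityInterior hF humeas hufin
        fun x hx ↦ ⟨hFu hx, hu x (hFu hx)⟩
      have hae := densityInterior_ae_eq hQ.measurableSet
      have hclosure : @closure ℝ densityTopology (densityInterior Q) ⊆ Q :=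
        @closure_minimal ℝ densityTopology _ _ (densityInterior_subset Q)
          (hQ.mono densityTopology_le)
      refine ⟨densityInterior Q, isOpen_densityInterior hQ.measurableSet, hcF.trans hFQ,
        hclosure.trans hQu, ⟨hQ.nullMeasurableSet.congr hae.symm, ?_, F, hF, hcF, hFQ⟩,
        humeas, hufin, Q, hQ, hclosure, hQu⟩
      rwa [measure_congr (EventuallyEq.compl hae)]
  let _ := densityTopology
  exact ⟨c.lim, c.continuous_lim, aemeasurable_urysohnsCU_lim (fun _ _ h ↦ h.1) c, c.lim_mem_Icc,
    c.lim_of_mem_C, c.lim_of_notMem_U⟩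

end Urysohn

section Primitive

lemma norm_intervalIntegral_le_of_norm_le_on {g : ℝ → ℝ} {x y ε K : ℝ} {S : Set ℝ}
    (hg : AEStronglyMeasurable g) (hS : NullMeasurableSet S) (hε : 0 ≤ ε)
    (hgS : ∀ t ∈ S, ‖g t‖ ≤ ε) (hK : ∀ t, ‖g t‖ ≤ K) :
    ‖∫ t in x..y, g t‖ ≤ ε * |y - x| + K * volume.real (closedBall x |y - x| \ S) := by
  have hsub : uIoc x y ⊆ closedBall x |y - x| := fun t ht ↦
    abs_sub_left_of_mem_uIcc (uIoc_subset_uIcc ht)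
  have hball : volume (closedBall x |y - x|) ≠ ⊤ := measure_closedBall_lt_top.ne
  have hfin {T : Set ℝ} (hT : T ⊆ uIoc x y) : volume T < ⊤ :=
    (measure_ne_top_of_subset (hT.trans hsub) hball).lt_top
  have hint : IntegrableOn g (uIoc x y) :=
    Measure.integrableOn_of_bounded (hfin Subset.rfl).ne hg (Eventually.of_forall hK)
  have hlength : volume.real (uIoc x y) = |y - x| := by
    rw [Measure.real, Real.volume_uIoc, ENNReal.toReal_ofReal (abs_nonneg _)]
  rw [intervalIntegral.norm_intervalIntegral_eq, ← integral_inter_add_sdiff₀ hS hint]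
  refine (norm_add_le _ _).trans (add_le_add ?_ ?_)
  · refine (norm_setIntegral_le_of_norm_le_const (hfin inter_subset_left)
      fun t ht ↦ hgS t ht.2).trans (mul_le_mul_of_nonneg_left ?_ hε)
    exact (measureReal_mono inter_subset_left (hfin Subset.rfl).ne).trans_eq hlength
  · refine (norm_setIntegral_le_of_norm_le_const (hfin sdiff_subset)
      fun t _ ↦ hK t).trans (mul_le_mul_of_nonneg_left ?_ ((norm_nonneg _).trans (hK x)))
    exact measureReal_mono (sdiff_subset_sdiff_left hsub)
      (measure_ne_top_of_subset sdiff_subset hball)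

lemma intervalIntegral_isLittleO_of_tendsto_densityNhds {g : ℝ → ℝ} {x K : ℝ}
    (hg : AEStronglyMeasurable g) (hK : ∀ t, ‖g t‖ ≤ K)
    (hlim : Tendsto g (densityNhds x) (𝓝 0)) :
    (fun y ↦ ∫ t in x..y, g t) =o[𝓝 x] fun y ↦ y - x := by
  refine isLittleO_iff.2 fun c hc ↦ ?_
  have hK0 : 0 ≤ K := (norm_nonneg _).trans (hK x)
  set S := {t | ‖g t‖ ≤ c / 2}
  have hSmem : S ∈ densityNhds x := by
    filter_upwards [hlim (closedBall_mem_nhds 0 (half_pos hc))] with t ht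
    exact mem_closedBall_zero_iff.1 ht
  have hSmeas : NullMeasurableSet S := hg.norm.aemeasurable.nullMeasurable measurableSet_Iic
  have hdens : ∀ᶠ r in 𝓝[>] (0 : ℝ),
      volume.real (closedBall x r \ S) ≤ c / (2 * (K + 1)) * r := by
    filter_upwards [isLittleO_iff.1 (mem_densityNhds.1 hSmem)
      (by positivity : 0 < c / (2 * (K + 1))), self_mem_nhdsWithin] with r hr (hr0 : 0 < r)
    rwa [Real.norm_of_nonneg measureReal_nonneg, Real.norm_of_nonneg hr0.le] at hr
  have hpunctured := (tendsto_norm_sub_self_nhdsNE x).eventually hdens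
  filter_upwards [eventually_nhdsWithin_iff.1 hpunctured] with y hy
  rcases eq_or_ne y x with rfl | hyx
  · simp
  calc ‖∫ t in x..y, g t‖
      ≤ c / 2 * |y - x| + K * volume.real (closedBall x |y - x| \ S) :=
        norm_intervalIntegral_le_of_norm_le_on hg hSmeas (half_pos hc).le (fun t ht ↦ ht) hK
    _ ≤ c / 2 * |y - x| + (K + 1) * (c / (2 * (K + 1)) * |y - x|) := by
        gcongr
        · exact le_add_of_nonneg_right zero_le_one
        · exact hy hyx
    _ = c * ‖y - x‖ := by rw [Real.norm_eq_abs]; field_simp; ring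

lemma intervalIntegrable_of_norm_le {w : ℝ → ℝ} {K : ℝ} (hw : AEStronglyMeasurable w)
    (hK : ∀ t, ‖w t‖ ≤ K) (a b : ℝ) : IntervalIntegrable w volume a b :=
  intervalIntegrable_iff.2 <| Measure.integrableOn_of_bounded
    (by rw [Real.volume_uIoc]; exact ENNReal.ofReal_ne_top) hw (Eventually.of_forall hK)

lemma hasDerivAt_integral_of_tendsto_densityNhds {w : ℝ → ℝ} {x K : ℝ} (a : ℝ)
    (hw : AEStronglyMeasurable w) (hK : ∀ t, ‖w t‖ ≤ K)
    (hlim : Tendsto w (densityNhds x) (𝓝 (w x))) :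
    HasDerivAt (fun y ↦ ∫ t in a..y, w t) (w x) x := by
  have hint := intervalIntegrable_of_norm_le hw hK
  have hbound (t : ℝ) : ‖w t - w x‖ ≤ K + K :=
    (norm_sub_le _ _).trans (add_le_add (hK t) (hK x))
  refine hasDerivAt_iff_isLittleO.2 ((intervalIntegral_isLittleO_of_tendsto_densityNhds
    (hw.sub aestronglyMeasurable_const) hbound (tendsto_sub_nhds_zero_iff.2 hlim)).congr_left ?_)
  intro y
  rw [intervalIntegral.integral_interval_sub_left (hint a y) (hint a x)]
  simp [intervalIntegral.integral_sub (hint x y) intervalIntegrable_const]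

end Primitive

section InfiniteDerivative

/-- `f` has an infinite derivative at `x`: its difference quotients tend to infinity in absolute
value. The inverse of such an `f` is flat at `f x`. -/
def HasInfiniteDerivAt (f : ℝ → ℝ) (x : ℝ) : Prop :=
  (fun y ↦ y - x) =o[𝓝 x] fun y ↦ f y - f x

lemma abs_sub_le_abs_sub_of_monotone {α : Type*} [LinearOrder α] {f g : α → ℝ} (hg : Monotone g)
    (hfg : Monotone fun x ↦ f x - g x) (x y : α) : |g y - g x| ≤ |f y - f x| := by
  rcases le_total x y with h | h
  · have := hg h
    have := hfg h
    rw [abs_of_nonneg (by linarith), abs_of_nonneg (by linarith)]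
    linarith
  · have := hg h
    have := hfg h
    rw [abs_of_nonpos (by linarith), abs_of_nonpos (by linarith)]
    linarith

lemma hasInfiniteDerivAt_of_forall_le {f : ℝ → ℝ} {x : ℝ}
    (h : ∀ N : ℕ, ∃ g d, Monotone g ∧ (Monotone fun y ↦ f y - g y) ∧ (N : ℝ) < d ∧
      HasDerivAt g d x) :
    HasInfiniteDerivAt f x := by
  refine isLittleO_iff.2 fun c hc ↦ ?_
  obtain ⟨N, hN⟩ := exists_nat_gt c⁻¹
  obtain ⟨g, d, hg, hfg, hNd, hderiv⟩ := h N
  have hgap : 0 < d - N := sub_pos.2 hNd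
  filter_upwards [isLittleO_iff.1 hderiv.isLittleO hgap] with y hy
  have hslope : N * |y - x| ≤ |g y - g x| := by
    have hd : 0 ≤ d := (Nat.cast_nonneg N).trans hNd.le
    have htri := abs_sub_abs_le_abs_sub ((y - x) * d) (g y - g x)
    rw [abs_mul, abs_of_nonneg hd, abs_sub_comm _ (g y - g x)] at htri
    simp only [Real.norm_eq_abs, smul_eq_mul] at hy
    linarith
  have hcN : 1 ≤ c * N := by
    have := mul_lt_mul_of_pos_left hN hc
    rw [mul_inv_cancel₀ hc.ne'] at this
    exact this.le
  simp only [Real.norm_eq_abs]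
  calc |y - x| ≤ c * N * |y - x| := le_mul_of_one_le_left (abs_nonneg _) hcN
    _ ≤ c * |f y - f x| := by
      rw [mul_assoc]
      gcongr
      exact hslope.trans (abs_sub_le_abs_sub_of_monotone hg hfg x y)

end InfiniteDerivative

section Zahorski

/-- An increasing sequence of closed sets exhausting `ℝ` up to a null set, fast enough that each
point of `C n` is a point of density one, with quadratic rate, of `C (n + 1)`. -/
structure IsDensityExhaustion (C : ℕ → Set ℝ) : Prop where
  isClosed (n : ℕ) : IsClosed (C n)
  monotone : Monotone C
  volume_compl_le (n : ℕ) : volume (C n)ᶜ ≤ ENNReal.ofReal ((1 / 2) ^ n)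
  volume_closedBall_sdiff_le (n : ℕ) {x : ℝ} (hx : x ∈ C n) {r : ℝ} (hr : 0 < r) :
    volume (closedBall x r \ C (n + 1)) ≤ ENNReal.ofReal ((1 / 2) ^ (n + 1) * r ^ 2)

lemma exists_isDensityExhaustion_disjoint {E : Set ℝ} (hE : volume E = 0) :
    ∃ C, IsDensityExhaustion C ∧ ∀ n, Disjoint (C n) E := by
  set A := (toMeasurable volume E)ᶜ
  have hA : MeasurableSet A := (measurableSet_toMeasurable volume E).compl
  have hAnull : volume Aᶜ = 0 := by rwa [compl_compl, measure_toMeasurable]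
  have hdisj : Disjoint A E :=
    disjoint_compl_left.mono_right (subset_toMeasurable volume E)
  have hstep (n : ℕ) (C : {C : Set ℝ // IsClosed C ∧ Disjoint C E}) :
      ∃ Q : {Q : Set ℝ // IsClosed Q ∧ Disjoint Q E}, C.1 ⊆ Q.1 ∧
        volume Q.1ᶜ ≤ ENNReal.ofReal ((1 / 2) ^ n) ∧ ∀ x ∈ C.1, ∀ r > 0,
          volume (closedBall x r \ Q) ≤ ENNReal.ofReal ((1 / 2) ^ n * r ^ 2) := by
    obtain ⟨Q, hQ, hCQ, hQsub, hQvol, hQball⟩ :=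
      exists_isClosed_subset_union_measure_closedBall_sdiff_le C.2.1 hA
        (hAnull ▸ ENNReal.zero_ne_top) (by positivity : 0 < (1 / 2 : ℝ) ^ n)
    refine ⟨⟨Q, hQ, (C.2.2.union_left hdisj).mono_left hQsub⟩, hCQ, by simpa [hAnull] using hQvol,
      fun x hx r hr ↦ (hQball x hx r hr).trans_eq ?_⟩
    rw [measure_mono_null (fun y hy ↦ hy.2) hAnull, zero_add]
  choose next hsub hvol hball using hstep
  let C : ℕ → {C : Set ℝ // IsClosed C ∧ Disjoint C E} := fun n ↦
    n.rec (next 0 ⟨∅, isClosed_empty, empty_disjoint E⟩) fun n ↦ next (n + 1)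
  refine ⟨fun n ↦ (C n).1, ⟨fun n ↦ (C n).2.1, monotone_nat_of_le_succ fun n ↦ hsub _ _, ?_,
    fun n x hx r hr ↦ hball (n + 1) (C n) x hx r hr⟩, fun n ↦ (C n).2.2⟩
  rintro (_ | n)
  exacts [hvol _ _, hvol _ _]

namespace IsDensityExhaustion

variable {C : ℕ → Set ℝ} (hC : IsDensityExhaustion C)
include hC

lemma exists_weight (n : ℕ) :
    ∃ w : ℝ → ℝ, Continuous[densityTopology, _] w ∧ AEMeasurable w ∧ (∀ x, w x ∈ Icc 0 1) ∧
      EqOn w 0 (C n) ∧ EqOn w 1 (C (n + 1))ᶜ := by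
  have hmeas := (hC.isClosed (n + 1)).measurableSet
  have hae := densityInterior_ae_eq hmeas
  have hfin : volume (densityInterior (C (n + 1)))ᶜ ≠ ⊤ := by
    rw [measure_congr (EventuallyEq.compl hae)]
    exact ne_top_of_le_ne_top ENNReal.ofReal_ne_top (hC.volume_compl_le (n + 1))
  have hsub : C n ⊆ densityInterior (C (n + 1)) := fun x hx ↦
    ⟨hC.monotone n.le_succ hx, mem_densityNhds_of_measure_sdiff_le_sq (by positivity)
      fun r hr ↦ hC.volume_closedBall_sdiff_le n hx hr⟩
  obtain ⟨w, hw, hwmeas, hw01, hw0, hw1⟩ := exists_continuous_densityTopology_zero_one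
    (hC.isClosed n) (isOpen_densityInterior hmeas) (hmeas.nullMeasurableSet.congr hae.symm) hfin
    hsub
  exact ⟨w, hw, hwmeas, hw01, hw0, hw1.mono (compl_subset_compl.2 (densityInterior_subset _))⟩

/-- A density-continuous function with values in `[0, 1]`, zero on `C n` and one off
`C (n + 1)`. -/
noncomputable def weight (n : ℕ) : ℝ → ℝ := (hC.exists_weight n).choose

lemma continuous_weight (n : ℕ) : Continuous[densityTopology, _] (hC.weight n) :=
  (hC.exists_weight n).choose_spec.1

lemma aestronglyMeasurable_weight (n : ℕ) : AEStronglyMeasurable (hC.weight n) :=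
  (hC.exists_weight n).choose_spec.2.1.aestronglyMeasurable

lemma weight_mem_Icc (n : ℕ) (x : ℝ) : hC.weight n x ∈ Icc 0 1 :=
  (hC.exists_weight n).choose_spec.2.2.1 x

lemma weight_of_mem {n : ℕ} {x : ℝ} (hx : x ∈ C n) : hC.weight n x = 0 :=
  (hC.exists_weight n).choose_spec.2.2.2.1 hx

lemma weight_of_notMem {n : ℕ} {x : ℝ} (hx : x ∉ C (n + 1)) : hC.weight n x = 1 :=
  (hC.exists_weight n).choose_spec.2.2.2.2 hx

lemma norm_weight_le_one (n : ℕ) (x : ℝ) : ‖hC.weight n x‖ ≤ 1 := by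
  rw [Real.norm_of_nonneg (hC.weight_mem_Icc n x).1]
  exact (hC.weight_mem_Icc n x).2

/-- The primitive of the `n`-th weight, a summand of Zahorski's function. -/
noncomputable def primitive (n : ℕ) (y : ℝ) : ℝ := ∫ t in 0..y, hC.weight n t

lemma hasDerivAt_primitive (n : ℕ) (x : ℝ) : HasDerivAt (hC.primitive n) (hC.weight n x) x :=
  hasDerivAt_integral_of_tendsto_densityNhds 0 (hC.aestronglyMeasurable_weight n)
    (hC.norm_weight_le_one n) <|
    (@Continuous.tendsto ℝ ℝ densityTopology _ _ (hC.continuous_weight n) x).mono_left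
      (densityNhds_le_nhds_densityTopology x)

lemma monotone_primitive (n : ℕ) : Monotone (hC.primitive n) :=
  monotone_of_hasDerivAt_nonneg (hC.hasDerivAt_primitive n) fun x ↦ (hC.weight_mem_Icc n x).1

lemma abs_primitive_sub_le (n : ℕ) (x y : ℝ) :
    |hC.primitive n y - hC.primitive n x| ≤ volume.real (closedBall x |y - x| \ C n) := by
  have hint := intervalIntegrable_of_norm_le (hC.aestronglyMeasurable_weight n)
    (hC.norm_weight_le_one n)
  rw [primitive, primitive, intervalIntegral.integral_interval_sub_left (hint 0 y) (hint 0 x)]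
  simpa using norm_intervalIntegral_le_of_norm_le_on (hC.aestronglyMeasurable_weight n)
    (hC.isClosed n).measurableSet.nullMeasurableSet le_rfl
    (fun t ht ↦ by rw [hC.weight_of_mem ht, norm_zero]) (hC.norm_weight_le_one n)

lemma abs_primitive_le (n : ℕ) (y : ℝ) : |hC.primitive n y| ≤ (1 / 2) ^ n := by
  have hzero : hC.primitive n 0 = 0 := intervalIntegral.integral_same
  have hle : volume (closedBall 0 |y - 0| \ C n) ≤ ENNReal.ofReal ((1 / 2) ^ n) :=
    (measure_mono fun _ ht ↦ ht.2).trans (hC.volume_compl_le n)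
  rw [← sub_zero (hC.primitive n y), ← hzero]
  exact (hC.abs_primitive_sub_le n 0 y).trans (ENNReal.toReal_le_of_le_ofReal (by positivity) hle)

lemma abs_primitive_succ_sub_le {n : ℕ} {x : ℝ} (hx : x ∈ C n) (y : ℝ) :
    |hC.primitive (n + 1) y - hC.primitive (n + 1) x| ≤ (1 / 2) ^ (n + 1) * |y - x| ^ 2 := by
  rcases eq_or_ne y x with rfl | hyx
  · simp
  · exact (hC.abs_primitive_sub_le (n + 1) x y).trans (ENNReal.toReal_le_of_le_ofReal
      (by positivity) (hC.volume_closedBall_sdiff_le n hx (abs_pos.2 (sub_ne_zero.2 hyx))))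

/-- The sum of the primitives from the `N`-th on. At a point of `C n` the tail from `n + 1` on has
derivative zero, so that only finitely many primitives contribute to the slope there. -/
noncomputable def tail (N : ℕ) (y : ℝ) : ℝ := ∑' n, hC.primitive (n + N) y

lemma summable_primitive (y : ℝ) : Summable fun n ↦ hC.primitive n y :=
  Summable.of_norm_bounded summable_geometric_two fun n ↦ hC.abs_primitive_le n y

lemma summable_primitive_add (N : ℕ) (y : ℝ) : Summable fun n ↦ hC.primitive (n + N) y :=
  (summable_nat_add_iff N).2 (hC.summable_primitive y)

lemma sum_add_tail (N : ℕ) (y : ℝ) :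
    ∑ n ∈ Finset.range N, hC.primitive n y + hC.tail N y = hC.tail 0 y :=
  (hC.summable_primitive y).sum_add_tsum_nat_add N

lemma continuous_tail_zero : Continuous (hC.tail 0) :=
  continuous_tsum (fun n ↦ continuous_iff_continuousAt.2 fun x ↦
    (hC.hasDerivAt_primitive n x).continuousAt) summable_geometric_two hC.abs_primitive_le

lemma monotone_tail (N : ℕ) : Monotone (hC.tail N) := fun x y hxy ↦
  (hC.summable_primitive_add N x).tsum_le_tsum (fun n ↦ hC.monotone_primitive (n + N) hxy)
    (hC.summable_primitive_add N y)

lemma hasDerivAt_tail {n : ℕ} {x : ℝ} (hx : x ∈ C n) : HasDerivAt (hC.tail (n + 1)) 0 x := by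
  have hbound (y : ℝ) : ‖hC.tail (n + 1) y - hC.tail (n + 1) x‖ ≤ 2 * ‖‖y - x‖ ^ 2‖ := by
    rw [tail, tail, ← (hC.summable_primitive_add _ y).tsum_sub (hC.summable_primitive_add _ x)]
    refine tsum_of_norm_bounded (hasSum_geometric_two.mul_right _) fun k ↦ ?_
    refine (hC.abs_primitive_succ_sub_le (hC.monotone (Nat.le_add_left n k) hx) y).trans ?_
    rw [norm_pow, norm_norm, Real.norm_eq_abs]
    gcongr ?_ * _
    exact pow_le_pow_of_le_one (by norm_num) (by norm_num) (by omega)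
  refine hasDerivAt_iff_isLittleO.2 ?_
  simp only [smul_zero, sub_zero]
  exact (IsBigO.of_bound 2 (Eventually.of_forall hbound)).trans_isLittleO
    (isLittleO_pow_sub_sub x one_lt_two)

/-- Zahorski's function: an increasing function which is differentiable on every `C n` and has an
infinite derivative off their union. -/
noncomputable def zahorski (y : ℝ) : ℝ := y + hC.tail 0 y

lemma differentiableAt_zahorski {n : ℕ} {x : ℝ} (hx : x ∈ C n) :
    DifferentiableAt ℝ hC.zahorski x := by
  have heq : hC.zahorski = fun y ↦
      y + (∑ k ∈ Finset.range (n + 1), hC.primitive k y + hC.tail (n + 1) y) := by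
    funext y
    rw [hC.sum_add_tail, zahorski]
  rw [heq]
  exact differentiableAt_id.add ((DifferentiableAt.fun_sum fun k _ ↦
    (hC.hasDerivAt_primitive k x).differentiableAt).add (hC.hasDerivAt_tail hx).differentiableAt)

lemma hasInfiniteDerivAt_zahorski {x : ℝ} (hx : ∀ n, x ∉ C n) :
    HasInfiniteDerivAt hC.zahorski x := by
  refine hasInfiniteDerivAt_of_forall_le fun N ↦ ?_
  have hderiv : HasDerivAt (fun y ↦ y + ∑ n ∈ Finset.range N, hC.primitive n y) (1 + N) x := by
    refine (hasDerivAt_id x).add ?_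
    simpa [hC.weight_of_notMem (hx _)] using
      HasDerivAt.fun_sum fun n (_ : n ∈ Finset.range N) ↦ hC.hasDerivAt_primitive n x
  refine ⟨_, _, fun y z hyz ↦ ?_, ?_, lt_one_add _, hderiv⟩
  · have hsum := Finset.sum_le_sum fun n (_ : n ∈ Finset.range N) ↦ hC.monotone_primitive n hyz
    exact add_le_add hyz hsum
  · have heq (y : ℝ) : hC.zahorski y - (y + ∑ n ∈ Finset.range N, hC.primitive n y) =
        hC.tail N y := by
      rw [zahorski, ← hC.sum_add_tail N]
      ring
    simpa only [heq] using hC.monotone_tail N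

end IsDensityExhaustion

theorem exists_continuous_differentiableAt_or_hasInfiniteDerivAt {E : Set ℝ} (hE : volume E = 0) :
    ∃ f : ℝ → ℝ, Continuous f ∧ (Monotone fun x ↦ f x - x) ∧
      ∀ x, (x ∉ E ∧ DifferentiableAt ℝ f x) ∨ HasInfiniteDerivAt f x := by
  obtain ⟨C, hC, hdisj⟩ := exists_isDensityExhaustion_disjoint hE
  refine ⟨hC.zahorski, continuous_id.add hC.continuous_tail_zero, ?_, fun x ↦ ?_⟩
  · simpa [IsDensityExhaustion.zahorski] using hC.monotone_tail 0
  · by_cases hx : ∃ n, x ∈ C n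
    · obtain ⟨n, hn⟩ := hx
      exact Or.inl ⟨disjoint_left.1 (hdisj n) hn, hC.differentiableAt_zahorski hn⟩
    · exact Or.inr (hC.hasInfiniteDerivAt_zahorski (not_exists.1 hx))

end Zahorski

section LowerEndpoint

/-- The Goetschel–Voxman conditions on the lower endpoint, as a function of the level, of the cuts
of a fuzzy number; the upper endpoint is handled through its negative. -/
structure IsLowerEndpoint (L : ℝ → ℝ) : Prop where
  monotoneOn : MonotoneOn L (Icc 0 1)
  continuousWithinAt_Iic {a : ℝ} (ha : a ∈ Ioc 0 1) : ContinuousWithinAt L (Iic a) a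
  continuousWithinAt_zero : ContinuousWithinAt L (Ici 0) 0

lemma IsLowerEndpoint.of_monotone {L : ℝ → ℝ} (hL : Monotone L) (hcont : Continuous L) :
    IsLowerEndpoint L :=
  ⟨hL.monotoneOn _, fun _ ↦ hcont.continuousWithinAt, hcont.continuousWithinAt⟩

/-- The generalised inverse of a level function. It vanishes to the left of `L 0`, where the
supremum is over the empty set. -/
noncomputable def generalizedInverse (L : ℝ → ℝ) (x : ℝ) : ℝ := sSup {b | b ∈ Icc 0 1 ∧ L b ≤ x}

lemma generalizedInverse_mem_Icc (L : ℝ → ℝ) (x : ℝ) : generalizedInverse L x ∈ Icc 0 1 :=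
  ⟨Real.sSup_nonneg fun _ hb ↦ hb.1.1, Real.sSup_le (fun _ hb ↦ hb.1.2) zero_le_one⟩

lemma le_generalizedInverse {L : ℝ → ℝ} {a x : ℝ} (ha : a ∈ Icc 0 1) (hx : L a ≤ x) :
    a ≤ generalizedInverse L x :=
  le_csSup ⟨1, fun _ hb ↦ hb.1.2⟩ ⟨ha, hx⟩

lemma lt_apply_of_generalizedInverse_lt {L : ℝ → ℝ} {a x : ℝ} (ha : a ≤ 1)
    (h : generalizedInverse L x < a) : x < L a := by
  refine not_le.1 fun hx ↦ h.not_ge (le_generalizedInverse ⟨?_, ha⟩ hx)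
  exact (generalizedInverse_mem_Icc L x).1.trans h.le

lemma one_le_min_generalizedInverse {L R : ℝ → ℝ} (hLR : L 1 ≤ R 1) :
    1 ≤ min (generalizedInverse L (L 1)) (generalizedInverse (-R) (-L 1)) :=
  le_min (le_generalizedInverse (right_mem_Icc.2 zero_le_one) le_rfl)
    (le_generalizedInverse (right_mem_Icc.2 zero_le_one) (neg_le_neg hLR))

namespace IsLowerEndpoint

variable {L : ℝ → ℝ} (hL : IsLowerEndpoint L)
include hL

lemma add {M : ℝ → ℝ} (hM : IsLowerEndpoint M) : IsLowerEndpoint (L + M) :=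
  ⟨hL.monotoneOn.add hM.monotoneOn,
    fun ha ↦ (hL.continuousWithinAt_Iic ha).add (hM.continuousWithinAt_Iic ha),
    hL.continuousWithinAt_zero.add hM.continuousWithinAt_zero⟩

lemma le_generalizedInverse_iff {a x : ℝ} (ha : a ∈ Ioc 0 1) :
    a ≤ generalizedInverse L x ↔ L a ≤ x := by
  refine ⟨fun h ↦ ?_, le_generalizedInverse (Ioc_subset_Icc_self ha)⟩
  have hbelow : ∀ᶠ b in 𝓝[<] a, L b ≤ x := by
    filter_upwards [Ioo_mem_nhdsLT ha.1] with b hb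
    have hne : {b | b ∈ Icc 0 1 ∧ L b ≤ x}.Nonempty := by
      by_contra hempty
      rw [generalizedInverse, not_nonempty_iff_eq_empty.1 hempty, Real.sSup_empty] at h
      exact h.not_gt ha.1
    obtain ⟨c, ⟨hc, hcx⟩, hbc⟩ := exists_lt_of_lt_csSup hne (hb.2.trans_le h)
    exact (hL.monotoneOn ⟨hb.1.le, hbc.le.trans hc.2⟩ hc hbc.le).trans hcx
  exact le_of_tendsto ((hL.continuousWithinAt_Iic ha).mono Iio_subset_Iic_self) hbelow

lemma apply_generalizedInverse_le {x : ℝ} (hx : 0 < generalizedInverse L x) :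
    L (generalizedInverse L x) ≤ x :=
  (hL.le_generalizedInverse_iff ⟨hx, (generalizedInverse_mem_Icc L x).2⟩).1 le_rfl

lemma generalizedInverse_pos {x : ℝ} (hx : L 0 < x) : 0 < generalizedInverse L x := by
  have hev : ∀ᶠ a in 𝓝[>] (0 : ℝ), L a < x :=
    (hL.continuousWithinAt_zero.mono Ioi_subset_Ici_self).eventually (gt_mem_nhds hx)
  obtain ⟨a, hax, ha⟩ := (hev.and (Ioc_mem_nhdsGT one_pos)).exists
  exact ha.1.trans_le (le_generalizedInverse (Ioc_subset_Icc_self ha) hax.le)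

lemma le_of_generalizedInverse_pos {x : ℝ} (hx : 0 < generalizedInverse L x) : L 0 ≤ x :=
  (hL.monotoneOn ⟨le_rfl, zero_le_one⟩ (generalizedInverse_mem_Icc L x) hx.le).trans
    (hL.apply_generalizedInverse_le hx)

end IsLowerEndpoint

end LowerEndpoint

namespace FuzzyNumber

/-- The fuzzy number whose `a`-cut is `[L a, R a]`; its membership function is the minimum of the
inverses of the two branches. -/
noncomputable def ofEndpoints (L R : ℝ → ℝ) (hL : IsLowerEndpoint L) (hR : IsLowerEndpoint (-R))
    (hLR : L 1 ≤ R 1) : FuzzyNumber where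
  u x := min (generalizedInverse L x) (generalizedInverse (-R) (-x))
  mem_unit x := ⟨le_min (generalizedInverse_mem_Icc L x).1 (generalizedInverse_mem_Icc (-R) (-x)).1,
    (min_le_left _ _).trans (generalizedInverse_mem_Icc L x).2⟩
  lo := L
  hi := R
  cut_eq a ha := by
    ext x
    change a ≤ min _ _ ↔ _
    rw [le_min_iff, hL.le_generalizedInverse_iff ha, hR.le_generalizedInverse_iff ha, mem_Icc,
      Pi.neg_apply, neg_le_neg_iff]
  cut0_eq := by
    set S := {x | 0 < min (generalizedInverse L x) (generalizedInverse (-R) (-x))}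
    have hIoo : Ioo (L 0) (R 0) ⊆ S := fun x hx ↦
      lt_min (hL.generalizedInverse_pos hx.1) (hR.generalizedInverse_pos (neg_lt_neg hx.2))
    have hIcc : S ⊆ Icc (L 0) (R 0) := fun x hx ↦
      ⟨hL.le_of_generalizedInverse_pos (hx.trans_le (min_le_left _ _)),
        neg_le_neg_iff.1 (hR.le_of_generalizedInverse_pos (hx.trans_le (min_le_right _ _)))⟩
    refine (closure_minimal hIcc isClosed_Icc).antisymm ?_
    rcases eq_or_ne (L 0) (R 0) with h0 | h0
    · have hL1 : L 1 ∈ S := one_pos.trans_le (one_le_min_generalizedInverse hLR)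
      have hL0 : L 1 = L 0 := le_antisymm ((hIcc hL1).2.trans h0.ge) (hIcc hL1).1
      rw [← h0, Icc_self, singleton_subset_iff, ← hL0]
      exact subset_closure hL1
    · rw [← closure_Ioo h0]
      exact closure_mono hIoo
  one_cut_nonempty := ⟨L 1, one_le_min_generalizedInverse hLR⟩

end FuzzyNumber

section InverseDerivative

lemma monotone_of_monotone_sub_mul {f : ℝ → ℝ} {c : ℝ} (hc : 0 ≤ c)
    (hf : Monotone fun x ↦ f x - c * x) : Monotone f := by
  simpa using hf.add (monotone_id.const_mul hc)

lemma hasDerivAt_of_forall_le_iff {L g : ℝ → ℝ} {x d : ℝ} (hd : 0 < d) (hL : HasDerivAt L d (g x))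
    (hx : L (g x) = x) (hgL : ∀ᶠ a in 𝓝 (g x), ∀ y, a ≤ g y ↔ L a ≤ y) :
    HasDerivAt g d⁻¹ x := by
  refine .of_isLittleO (isLittleO_iff.2 fun ε hε ↦ ?_)
  let a (t y : ℝ) : ℝ := g x + ((y - x) * d⁻¹ + t * |y - x|)
  have ha (t : ℝ) : Tendsto (a t) (𝓝 x) (𝓝 (g x)) := by
    have : Continuous (a t) := by fun_prop
    simpa [a] using this.tendsto x
  have hbigO (t : ℝ) : (fun y ↦ a t y - g x) =O[𝓝 x] fun y ↦ y - x := by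
    simp only [a, add_sub_cancel_left, mul_comm _ d⁻¹]
    exact (isBigO_const_mul_self _ _ _).add ((isBigO_refl _ _).norm_left.const_mul_left t)
  have happrox (t : ℝ) : ∀ᶠ y in 𝓝 x,
      |L (a t y) - (y + d * (t * |y - x|))| ≤ d * ε / 2 * |y - x| := by
    have hlittle := (hL.isLittleO.comp_tendsto (ha t)).trans_isBigO (hbigO t)
    filter_upwards [isLittleO_iff.1 hlittle (by positivity : 0 < d * ε / 2)] with y hy
    have hlin : (a t y - g x) * d = y - x + d * (t * |y - x|) := by
      simp only [a]
      field_simp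
      ring
    simp only [Function.comp_apply, hx, smul_eq_mul, hlin, Real.norm_eq_abs] at hy
    convert hy using 2
    ring
  filter_upwards [happrox ε, happrox (-ε), (ha ε).eventually hgL, (ha (-ε)).eventually hgL]
    with y hy hy' hgε hgε'
  rcases eq_or_ne y x with rfl | hne
  · simp
  have hpos : 0 < d * ε * |y - x| := by have := abs_pos.2 (sub_ne_zero.2 hne); positivity
  have hlt : g y < a ε y := by
    rw [← not_le, hgε y, not_le]
    linarith [(abs_le.1 hy).1]
  have hle : a (-ε) y ≤ g y := (hgε' y).2 (by linarith [(abs_le.1 hy').2])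
  simp only [a] at hlt hle
  rw [Real.norm_eq_abs, Real.norm_eq_abs, smul_eq_mul, abs_le]
  constructor <;> linarith

end InverseDerivative

section GeneralizedInverseDerivative

namespace IsLowerEndpoint

variable {L ρ : ℝ → ℝ} (hL : IsLowerEndpoint L)
include hL

lemma generalizedInverse_monotoneOn : MonotoneOn (generalizedInverse L) (Ioi (L 0)) :=
  fun x hx _ _ hxy ↦ le_generalizedInverse (generalizedInverse_mem_Icc L x)
    ((hL.apply_generalizedInverse_le (hL.generalizedInverse_pos hx)).trans hxy)

lemma sub_generalizedInverse_le (hρ : Continuous ρ)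
    (hLρ : MonotoneOn (fun a ↦ L a - ρ a) (Icc 0 1)) {x y : ℝ} (hx : L 0 < x) (hxy : x ≤ y) :
    ρ (generalizedInverse L y) - ρ (generalizedInverse L x) ≤ y - x := by
  set g := generalizedInverse L
  have hy : 0 < g y := hL.generalizedInverse_pos (hx.trans_le hxy)
  rcases (hL.generalizedInverse_monotoneOn hx (hx.trans_le hxy) hxy).eq_or_lt with heq | hlt
  · change g x = g y at heq
    simpa [heq] using hxy
  have hlim : Tendsto (fun a ↦ ρ (g y) - ρ a) (𝓝[>] g x) (𝓝 (ρ (g y) - ρ (g x))) :=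
    ((continuous_const.sub hρ).tendsto _).mono_left nhdsWithin_le_nhds
  refine le_of_tendsto hlim ?_
  filter_upwards [Ioo_mem_nhdsGT hlt] with a ha
  have hay : a ≤ 1 := ha.2.le.trans (generalizedInverse_mem_Icc L y).2
  have hxa : x < L a := lt_apply_of_generalizedInverse_lt hay ha.1
  have hmono : L a - ρ a ≤ L (g y) - ρ (g y) :=
    hLρ ⟨(generalizedInverse_mem_Icc L x).1.trans ha.1.le, hay⟩ (generalizedInverse_mem_Icc L y)
      ha.2.le
  linarith [hL.apply_generalizedInverse_le hy]

lemma abs_sub_generalizedInverse_le (hρ : Continuous ρ) (hρ_mono : Monotone ρ)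
    (hLρ : MonotoneOn (fun a ↦ L a - ρ a) (Icc 0 1)) {x y : ℝ} (hx : L 0 < x) (hy : L 0 < y) :
    |ρ (generalizedInverse L y) - ρ (generalizedInverse L x)| ≤ |y - x| := by
  wlog hxy : x ≤ y generalizing x y
  · rw [abs_sub_comm, abs_sub_comm y]
    exact this hy hx (le_of_not_ge hxy)
  rw [abs_of_nonneg (sub_nonneg.2 (hρ_mono (hL.generalizedInverse_monotoneOn hx hy hxy))),
    abs_of_nonneg (sub_nonneg.2 hxy)]
  exact hL.sub_generalizedInverse_le hρ hLρ hx hxy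

lemma hasDerivAt_generalizedInverse {x d : ℝ} (hd : 0 < d) (hx : generalizedInverse L x ∈ Ioo 0 1)
    (hderiv : HasDerivAt L d (generalizedInverse L x)) :
    HasDerivAt (generalizedInverse L) d⁻¹ x := by
  have hge : x ≤ L (generalizedInverse L x) := by
    refine ge_of_tendsto (hderiv.continuousAt.tendsto.mono_left
      (nhdsWithin_le_nhds (s := Ioi (generalizedInverse L x)))) ?_
    filter_upwards [Ioo_mem_nhdsGT hx.2] with a ha
    exact (lt_apply_of_generalizedInverse_lt ha.2.le ha.1).le
  refine hasDerivAt_of_forall_le_iff hd hderiv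
    ((hL.apply_generalizedInverse_le hx.1).antisymm hge) ?_
  filter_upwards [Ioo_mem_nhds hx.1 hx.2] with a ha y
  exact hL.le_generalizedInverse_iff (Ioo_subset_Ioc_self ha)

lemma hasDerivAt_generalizedInverse_zero {c : ℝ} (hc : 0 < c) (hρ : Continuous ρ)
    (hρc : Monotone fun a ↦ ρ a - c * a) (hLρ : MonotoneOn (fun a ↦ L a - ρ a) (Icc 0 1)) {x : ℝ}
    (hx : L 0 < x) (hinf : HasInfiniteDerivAt ρ (generalizedInverse L x)) :
    HasDerivAt (generalizedInverse L) 0 x := by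
  set g := generalizedInverse L
  have hρ_mono : Monotone ρ := monotone_of_monotone_sub_mul hc.le hρc
  have hbound : ∀ᶠ y in 𝓝 x, |ρ (g y) - ρ (g x)| ≤ |y - x| := by
    filter_upwards [lt_mem_nhds hx] with y hy
    exact hL.abs_sub_generalizedInverse_le hρ hρ_mono hLρ hx hy
  have hbigO : (fun y ↦ ρ (g y) - ρ (g x)) =O[𝓝 x] fun y ↦ y - x :=
    .of_bound 1 (by simpa using hbound)
  have hcont : Tendsto g (𝓝 x) (𝓝 (g x)) := by
    have hg : (fun y ↦ g y - g x) =O[𝓝 x] fun y ↦ y - x := by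
      refine IsBigO.trans (.of_bound c⁻¹ (.of_forall fun y ↦ ?_)) hbigO
      have := abs_sub_le_abs_sub_of_monotone (monotone_id.const_mul hc.le) hρc (g x) (g y)
      rw [← mul_sub, abs_mul, abs_of_pos hc] at this
      rwa [Real.norm_eq_abs, Real.norm_eq_abs, ← div_eq_inv_mul, le_div_iff₀' hc]
    rw [← tendsto_sub_nhds_zero_iff]
    exact hg.trans_tendsto (tendsto_sub_nhds_zero_iff.2 tendsto_id)
  refine .of_isLittleO ?_
  simpa [Function.comp_def] using (hinf.comp_tendsto hcont).trans_isBigO hbigO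

/-- Zahorski's perturbation `ρ` makes the inverse of `L` smooth: where `ρ` has infinite slope the
inverse is flat, and elsewhere `L` has a finite slope, which is at least `c`. -/
lemma differentiableAt_generalizedInverse {c : ℝ} (hc : 0 < c) (hρ : Continuous ρ)
    (hρc : Monotone fun a ↦ ρ a - c * a) (hLρ : MonotoneOn (fun a ↦ L a - ρ a) (Icc 0 1))
    (h : ∀ a ∈ Ioc 0 1, (a ≠ 1 ∧ DifferentiableAt ℝ L a) ∨ HasInfiniteDerivAt ρ a) {x : ℝ}
    (hx : L 0 < x) : DifferentiableAt ℝ (generalizedInverse L) x := by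
  set a := generalizedInverse L x
  have ha : a ∈ Ioc 0 1 := ⟨hL.generalizedInverse_pos hx, (generalizedInverse_mem_Icc L x).2⟩
  rcases h a ha with ⟨ha1, hdiff⟩ | hinf
  · have ha' : a ∈ Ioo 0 1 := ⟨ha.1, ha.2.lt_of_ne ha1⟩
    have hderiv : HasDerivAt (fun b ↦ L b - c * b) (deriv L a - c) a := by
      simpa using hdiff.hasDerivAt.fun_sub ((hasDerivAt_id a).const_mul c)
    have hLc : MonotoneOn (fun b ↦ L b - c * b) (Icc 0 1) := by
      convert hLρ.add (hρc.monotoneOn _) using 2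
      ring
    have hslope : c ≤ deriv L a := by
      have := hLc.derivWithin_nonneg (x := a)
      rw [derivWithin_of_mem_nhds (Icc_mem_nhds ha'.1 ha'.2), hderiv.deriv] at this
      exact sub_nonneg.1 this
    exact (hL.hasDerivAt_generalizedInverse (hc.trans_le hslope) ha'
      hdiff.hasDerivAt).differentiableAt
  · exact (hL.hasDerivAt_generalizedInverse_zero hc hρ hρc hLρ hx hinf).differentiableAt

end IsLowerEndpoint

end GeneralizedInverseDerivative

lemma hasDerivAt_min {f g : ℝ → ℝ} {x d : ℝ} (hf : HasDerivAt f d x) (hg : HasDerivAt g d x)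
    (hfg : f x = g x) : HasDerivAt (fun y ↦ min (f y) (g y)) d x := by
  refine .of_isLittleO (isLittleO_iff.2 fun ε hε ↦ ?_)
  filter_upwards [isLittleO_iff.1 hf.isLittleO hε, isLittleO_iff.1 hg.isLittleO hε] with y hfy hgy
  rw [← hfg] at hgy ⊢
  rw [min_self]
  rcases min_choice (f y) (g y) with h | h <;> rwa [h]

namespace FuzzyNumber

lemma isDifferentiable_ofEndpoints {L R : ℝ → ℝ} (hL : IsLowerEndpoint L)
    (hR : IsLowerEndpoint (-R)) (hLR : L 1 ≤ R 1)
    (hdL : ∀ x, L 0 < x → DifferentiableAt ℝ (generalizedInverse L) x)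
    (hdR : ∀ x, (-R) 0 < x → DifferentiableAt ℝ (generalizedInverse (-R)) x) :
    (ofEndpoints L R hL hR hLR).IsDifferentiable := by
  intro x hx
  set f := generalizedInverse L
  set g : ℝ → ℝ := fun y ↦ generalizedInverse (-R) (-y)
  change DifferentiableAt ℝ (fun y ↦ min (f y) (g y)) x
  have hf : DifferentiableAt ℝ f x := hdL x hx.1
  have hg : DifferentiableAt ℝ g x := (hdR (-x) (neg_lt_neg hx.2)).comp x differentiableAt_id.neg
  have hf_le (y : ℝ) : f y ≤ 1 := (generalizedInverse_mem_Icc L y).2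
  have hg_le (y : ℝ) : g y ≤ 1 := (generalizedInverse_mem_Icc (-R) (-y)).2
  have hone : f x = 1 ∨ g x = 1 := by
    rcases le_total (L 1) x with h | h
    · exact .inl ((hf_le x).antisymm (le_generalizedInverse (right_mem_Icc.2 zero_le_one) h))
    · exact .inr ((hg_le x).antisymm
        (le_generalizedInverse (right_mem_Icc.2 zero_le_one) (neg_le_neg (h.trans hLR))))
  rcases lt_trichotomy (f x) (g x) with hlt | heq | hgt
  · refine hf.congr_of_eventuallyEq ?_
    filter_upwards [hf.continuousAt.eventually_lt hg.continuousAt hlt] with y hy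
    exact min_eq_left hy.le
  · have hfx : f x = 1 := hone.elim id heq.trans
    have hgx : g x = 1 := heq.symm.trans hfx
    have hf_max : IsLocalMax f x := .of_forall fun y ↦ hfx ▸ hf_le y
    have hg_max : IsLocalMax g x := .of_forall fun y ↦ hgx ▸ hg_le y
    have hf0 : HasDerivAt f 0 x := hf_max.deriv_eq_zero ▸ hf.hasDerivAt
    have hg0 : HasDerivAt g 0 x := hg_max.deriv_eq_zero ▸ hg.hasDerivAt
    exact (hasDerivAt_min hf0 hg0 heq).differentiableAt
  · refine hg.congr_of_eventuallyEq ?_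
    filter_upwards [hg.continuousAt.eventually_lt hf.continuousAt hgt] with y hy
    exact min_eq_right hy.le

lemma le_u_iff (u : FuzzyNumber) {a x : ℝ} (ha : a ∈ Ioc 0 1) :
    a ≤ u.u x ↔ x ∈ Icc (u.lo a) (u.hi a) :=
  Set.ext_iff.1 (u.cut_eq a ha) x

lemma mem_Icc_zero_of_u_pos (u : FuzzyNumber) {x : ℝ} (hx : 0 < u.u x) :
    x ∈ Icc (u.lo 0) (u.hi 0) :=
  u.cut0_eq ▸ subset_closure hx

lemma lo_le_hi (u : FuzzyNumber) {a : ℝ} (ha : a ∈ Icc 0 1) : u.lo a ≤ u.hi a := by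
  obtain ⟨x, hx⟩ := u.one_cut_nonempty
  rcases ha.1.eq_or_lt with rfl | ha0
  · exact nonempty_Icc.1 ⟨x, u.mem_Icc_zero_of_u_pos (one_pos.trans_le hx)⟩
  · exact nonempty_Icc.1 ⟨x, (u.le_u_iff ⟨ha0, ha.2⟩).1 (ha.2.trans hx)⟩

lemma Icc_subset_Icc_of_le (u : FuzzyNumber) {a b : ℝ} (ha : 0 ≤ a) (hab : a ≤ b) (hb : b ≤ 1) :
    Icc (u.lo b) (u.hi b) ⊆ Icc (u.lo a) (u.hi a) := by
  intro x hx
  rcases hab.eq_or_lt with rfl | hlt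
  · exact hx
  have hbx : b ≤ u.u x := (u.le_u_iff ⟨ha.trans_lt hlt, hb⟩).2 hx
  rcases ha.eq_or_lt with rfl | ha0
  · exact u.mem_Icc_zero_of_u_pos (hlt.trans_le hbx)
  · exact (u.le_u_iff ⟨ha0, hab.trans hb⟩).1 (hab.trans hbx)

lemma lo_monotoneOn (u : FuzzyNumber) : MonotoneOn u.lo (Icc 0 1) := fun _ ha _ hb hab ↦
  (u.Icc_subset_Icc_of_le ha.1 hab hb.2 (left_mem_Icc.2 (u.lo_le_hi hb))).1

lemma hi_antitoneOn (u : FuzzyNumber) : AntitoneOn u.hi (Icc 0 1) := fun _ ha _ hb hab ↦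
  (u.Icc_subset_Icc_of_le ha.1 hab hb.2 (right_mem_Icc.2 (u.lo_le_hi hb))).2

lemma continuousWithinAt_lo_Iic (u : FuzzyNumber) {a : ℝ} (ha : a ∈ Ioc 0 1) :
    ContinuousWithinAt u.lo (Iic a) a := by
  have hIoc : ∀ᶠ b in 𝓝[≤] a, b ∈ Ioc 0 a := Ioc_mem_nhdsLE ha.1
  have haI : a ∈ Icc 0 1 := Ioc_subset_Icc_self ha
  refine tendsto_order.2 ⟨fun x hx ↦ ?_, fun x hx ↦ ?_⟩
  · have hux : u.u x < a := not_le.1 fun h ↦ hx.not_ge ((u.le_u_iff ha).1 h).1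
    filter_upwards [hIoc, nhdsWithin_le_nhds (lt_mem_nhds hux)] with b hb hbx
    have hb1 : b ≤ 1 := hb.2.trans ha.2
    have hx_hi : x ≤ u.hi b :=
      hx.le.trans ((u.lo_le_hi haI).trans (u.hi_antitoneOn ⟨hb.1.le, hb1⟩ haI hb.2))
    exact not_le.1 fun h ↦ hbx.not_ge ((u.le_u_iff ⟨hb.1, hb1⟩).2 ⟨h, hx_hi⟩)
  · filter_upwards [hIoc] with b hb
    exact (u.lo_monotoneOn ⟨hb.1.le, hb.2.trans ha.2⟩ haI hb.2).trans_lt hx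

lemma continuousWithinAt_lo_zero (u : FuzzyNumber) : ContinuousWithinAt u.lo (Ici 0) 0 := by
  have h0 : (0 : ℝ) ∈ Icc 0 1 := left_mem_Icc.2 zero_le_one
  refine tendsto_order.2 ⟨fun x hx ↦ ?_, fun x hx ↦ ?_⟩
  · filter_upwards [Icc_mem_nhdsGE one_pos] with b hb
    exact hx.trans_le (u.lo_monotoneOn h0 hb hb.1)
  · have hmem : u.lo 0 ∈ closure {y | 0 < u.u y} :=
      u.cut0_eq ▸ left_mem_Icc.2 (u.lo_le_hi h0)
    obtain ⟨y, hyx, hy⟩ := _root_.mem_closure_iff.1 hmem (Iio x) isOpen_Iio hx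
    have hy1 : u.u y ≤ 1 := (u.mem_unit y).2
    have hlo : u.lo (u.u y) ≤ y := ((u.le_u_iff ⟨hy, hy1⟩).1 le_rfl).1
    filter_upwards [Icc_mem_nhdsGE hy] with b hb
    exact ((u.lo_monotoneOn ⟨hb.1, hb.2.trans hy1⟩ ⟨hy.le, hy1⟩ hb.2).trans hlo).trans_lt hyx

lemma isLowerEndpoint_lo (u : FuzzyNumber) : IsLowerEndpoint u.lo :=
  ⟨u.lo_monotoneOn, u.continuousWithinAt_lo_Iic, u.continuousWithinAt_lo_zero⟩

/-- The reflection of a fuzzy number in the origin; it exchanges the two endpoints. -/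
def neg (u : FuzzyNumber) : FuzzyNumber where
  u x := u.u (-x)
  mem_unit x := u.mem_unit (-x)
  lo := -u.hi
  hi := -u.lo
  cut_eq a ha := by
    change Neg.neg ⁻¹' {x | a ≤ u.u x} = _
    rw [u.cut_eq a ha, neg_preimage, Set.neg_Icc]
    rfl
  cut0_eq := by
    change closure (Homeomorph.neg ℝ ⁻¹' {x | 0 < u.u x}) = _
    rw [← Homeomorph.preimage_closure, u.cut0_eq]
    change Neg.neg ⁻¹' _ = _
    rw [neg_preimage, Set.neg_Icc]
    rfl
  one_cut_nonempty := by
    obtain ⟨x, hx⟩ := u.one_cut_nonempty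
    exact ⟨-x, by rwa [neg_neg]⟩

lemma isLowerEndpoint_neg_hi (u : FuzzyNumber) : IsLowerEndpoint (-u.hi) :=
  u.neg.isLowerEndpoint_lo

/-- The sum of two fuzzy numbers, whose cuts are the sums of the cuts. -/
noncomputable def add (u v : FuzzyNumber) : FuzzyNumber :=
  ofEndpoints (u.lo + v.lo) (u.hi + v.hi) (u.isLowerEndpoint_lo.add v.isLowerEndpoint_lo)
    (neg_add u.hi v.hi ▸ u.isLowerEndpoint_neg_hi.add v.isLowerEndpoint_neg_hi)
    (add_le_add (u.lo_le_hi (right_mem_Icc.2 zero_le_one))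
      (v.lo_le_hi (right_mem_Icc.2 zero_le_one)))

lemma le_u_add_iff (u v : FuzzyNumber) {a x : ℝ} (ha : a ∈ Ioc 0 1) :
    a ≤ (u.add v).u x ↔ ∃ y, a ≤ min (u.u y) (v.u (x - y)) := by
  have haI : a ∈ Icc 0 1 := Ioc_subset_Icc_self ha
  rw [le_u_iff _ ha]
  change x ∈ Icc (u.lo a + v.lo a) (u.hi a + v.hi a) ↔ _
  rw [← Set.Icc_add_Icc (u.lo_le_hi haI) (v.lo_le_hi haI), Set.mem_add]
  simp only [le_min_iff, u.le_u_iff ha, v.le_u_iff ha]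
  constructor
  · rintro ⟨y, hy, z, hz, rfl⟩
    exact ⟨y, hy, by rwa [add_sub_cancel_left]⟩
  · rintro ⟨y, hy, hz⟩
    exact ⟨y, hy, x - y, hz, add_sub_cancel y x⟩

theorem u_add (u v : FuzzyNumber) : (u.add v).u = conv u.u v.u := by
  ext x
  have hbdd : BddAbove (range fun y ↦ min (u.u y) (v.u (x - y))) :=
    ⟨1, forall_mem_range.2 fun y ↦ (min_le_left _ _).trans (u.mem_unit y).2⟩
  refine le_antisymm ?_ (ciSup_le fun y ↦ ?_)
  · rcases ((u.add v).mem_unit x).1.eq_or_lt with h0 | hpos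
    · rw [← h0]
      exact Real.iSup_nonneg fun y ↦ le_min (u.mem_unit y).1 (v.mem_unit (x - y)).1
    · obtain ⟨y, hy⟩ := (u.le_u_add_iff v ⟨hpos, ((u.add v).mem_unit x).2⟩).1 le_rfl
      exact hy.trans (le_ciSup hbdd y)
  · rcases le_or_gt (min (u.u y) (v.u (x - y))) 0 with h0 | hpos
    · exact h0.trans ((u.add v).mem_unit x).1
    · exact (u.le_u_add_iff v ⟨hpos, (min_le_left _ _).trans (u.mem_unit y).2⟩).2 ⟨y, le_rfl⟩

lemma dInf_nonneg (u v : FuzzyNumber) : 0 ≤ dInf u v :=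
  Real.iSup_nonneg fun _ ↦ le_max_of_le_left (abs_nonneg _)

lemma dInf_add_le (u v : FuzzyNumber) {δ : ℝ} (hlo : ∀ a ∈ Icc 0 1, |v.lo a| ≤ δ)
    (hhi : ∀ a ∈ Icc 0 1, |v.hi a| ≤ δ) : dInf (u.add v) u ≤ δ := by
  refine ciSup_le fun ⟨a, ha⟩ ↦ ?_
  change max |u.lo a + v.lo a - u.lo a| |u.hi a + v.hi a - u.hi a| ≤ δ
  rw [add_sub_cancel_left, add_sub_cancel_left]
  exact max_le (hlo a ha) (hhi a ha)

end FuzzyNumber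

lemma exists_continuous_differentiableAt_or_hasInfiniteDerivAt_of_ae {p : ℝ → Prop}
    (hp : ∀ᵐ a, p a) {δ : ℝ} (hδ : 0 < δ) :
    ∃ ρ : ℝ → ℝ, ∃ c > 0, Continuous ρ ∧ (Monotone fun a ↦ ρ a - c * a) ∧ ρ 0 = -δ ∧ ρ 1 = 0 ∧
      ∀ a, (p a ∧ DifferentiableAt ℝ ρ a) ∨ HasInfiniteDerivAt ρ a := by
  obtain ⟨f, hf, hf_mono, hfd⟩ := exists_continuous_differentiableAt_or_hasInfiniteDerivAt hp
  have hgap : 0 < f 1 - f 0 := by linarith [hf_mono zero_le_one]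
  have hc : 0 < δ / (f 1 - f 0) := div_pos hδ hgap
  refine ⟨fun a ↦ δ / (f 1 - f 0) * (f a - f 1), δ / (f 1 - f 0), hc, by fun_prop,
    fun a b hab ↦ ?_, by field_simp; ring, by simp, fun a ↦ ?_⟩
  · have := mul_le_mul_of_nonneg_left (hf_mono hab) hc.le
    simp only
    linarith
  · refine (hfd a).imp (fun h ↦ ⟨not_not.1 h.1, (h.2.sub_const _).const_mul _⟩) fun h ↦ ?_
    simpa only [HasInfiniteDerivAt, ← mul_sub, sub_sub_sub_cancel_right] using
      h.const_mul_right hc.ne'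

lemma IsLowerEndpoint.differentiableAt_generalizedInverse_add {m ρ : ℝ → ℝ}
    (hm : IsLowerEndpoint m) {c : ℝ} (hc : 0 < c) (hρ : Continuous ρ)
    (hρc : Monotone fun a ↦ ρ a - c * a)
    (h : ∀ a ∈ Ioc 0 1,
      (a ≠ 1 ∧ DifferentiableAt ℝ m a ∧ DifferentiableAt ℝ ρ a) ∨ HasInfiniteDerivAt ρ a)
    {x : ℝ} (hx : (m + ρ) 0 < x) : DifferentiableAt ℝ (generalizedInverse (m + ρ)) x := by
  have hρ_mono : Monotone ρ := monotone_of_monotone_sub_mul hc.le hρc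
  refine (hm.add (.of_monotone hρ_mono hρ)).differentiableAt_generalizedInverse hc hρ hρc
    (by simpa using hm.monotoneOn) (fun a ha ↦ ?_) hx
  exact (h a ha).imp_left fun ⟨ha1, hma, hρa⟩ ↦ ⟨ha1, hma.add hρa⟩

namespace FuzzyNumber

lemma ae_differentiableAt (u : FuzzyNumber) :
    ∀ᵐ a, a ∈ Ioc 0 1 → a ≠ 1 ∧ DifferentiableAt ℝ u.lo a ∧ DifferentiableAt ℝ (-u.hi) a := by
  filter_upwards [u.isLowerEndpoint_lo.monotoneOn.ae_differentiableWithinAt_of_mem,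
    u.isLowerEndpoint_neg_hi.monotoneOn.ae_differentiableWithinAt_of_mem,
    Measure.ae_ne volume 1] with a hlo hhi ha1 ha
  have hnhds : Icc 0 1 ∈ 𝓝 a := Icc_mem_nhds ha.1 (ha.2.lt_of_ne ha1)
  have haI : a ∈ Icc 0 1 := Ioc_subset_Icc_self ha
  exact ⟨ha1, (hlo haI).differentiableAt hnhds, (hhi haI).differentiableAt hnhds⟩

/-- The fuzzy number, symmetric about the origin, whose `a`-cut is `[ρ a, -ρ a]`; it serves as
the smoother. -/
noncomputable def symmetric (ρ : ℝ → ℝ) (hρ : IsLowerEndpoint ρ) (h1 : ρ 1 = 0) : FuzzyNumber :=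
  ofEndpoints ρ (-ρ) hρ (by rwa [neg_neg]) (by simp [h1])

theorem exists_smoother (u : FuzzyNumber) {δ : ℝ} (hδ : 0 < δ) :
    ∃ v w : FuzzyNumber, v.IsDifferentiable ∧ (w.u = conv u.u v.u ∧ w.IsDifferentiable) ∧
      dInf w u ≤ δ := by
  obtain ⟨ρ, c, hc, hρ, hρc, h0, h1, hρd⟩ :=
    exists_continuous_differentiableAt_or_hasInfiniteDerivAt_of_ae u.ae_differentiableAt hδ
  have hρ_mono : Monotone ρ := monotone_of_monotone_sub_mul hc.le hρc
  have hdiff {m : ℝ → ℝ} (hm : IsLowerEndpoint m)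
      (hmd : ∀ a, DifferentiableAt ℝ u.lo a → DifferentiableAt ℝ (-u.hi) a → DifferentiableAt ℝ m a)
      (x : ℝ) (hx : (m + ρ) 0 < x) : DifferentiableAt ℝ (generalizedInverse (m + ρ)) x := by
    refine hm.differentiableAt_generalizedInverse_add hc hρ hρc (fun a ha ↦ ?_) hx
    refine (hρd a).imp_left fun ⟨hua, hρa⟩ ↦ ?_
    obtain ⟨ha1, hlo, hhi⟩ := hua ha
    exact ⟨ha1, hmd a hlo hhi, hρa⟩
  have hzero : IsLowerEndpoint 0 := .of_monotone monotone_const continuous_const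
  have hdρ (x : ℝ) (hx : ρ 0 < x) : DifferentiableAt ℝ (generalizedInverse ρ) x := by
    simpa using hdiff hzero (fun _ _ _ ↦ differentiableAt_const 0) x (by simpa using hx)
  have hneg : -(u.hi + -ρ) = -u.hi + ρ := by abel
  have habs (a : ℝ) (ha : a ∈ Icc 0 1) : |ρ a| ≤ δ :=
    abs_le.2 ⟨h0 ▸ hρ_mono ha.1, ((hρ_mono ha.2).trans h1.le).trans hδ.le⟩
  let v := symmetric ρ (.of_monotone hρ_mono hρ) h1
  refine ⟨v, u.add v, isDifferentiable_ofEndpoints _ _ _ hdρ (by rwa [neg_neg]),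
    ⟨u.u_add v, isDifferentiable_ofEndpoints _ _ _
      (hdiff u.isLowerEndpoint_lo fun _ hlo _ ↦ hlo) ?_⟩,
    u.dInf_add_le v habs fun a ha ↦ (abs_neg (ρ a)).trans_le (habs a ha)⟩
  change ∀ x, (-(u.hi + -ρ)) 0 < x → DifferentiableAt ℝ (generalizedInverse (-(u.hi + -ρ))) x
  rw [hneg]
  exact hdiff u.isLowerEndpoint_neg_hi fun _ _ hhi ↦ hhi

end FuzzyNumber

theorem stmt18_general (u : FuzzyNumber) :
    ∃ v : ℕ → FuzzyNumber, ∃ W : ℕ → FuzzyNumber,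
      (∀ n, (v n).IsDifferentiable) ∧
      (∀ n, (W n).u = conv u.u (v n).u ∧ (W n).IsDifferentiable) ∧
      Filter.Tendsto (fun n => dInf (W n) u) Filter.atTop (nhds 0) := by
  choose v W hv hW hdist using fun n : ℕ ↦
    u.exists_smoother (δ := 1 / (n + 1)) Nat.one_div_pos_of_nat
  exact ⟨v, W, hv, hW, squeeze_zero (fun n ↦ FuzzyNumber.dInf_nonneg (W n) u) hdist
    tendsto_one_div_add_atTop_nhds_zero_nat⟩

theorem stmt18 (u : FuzzyNumber)
    (hfin : {x ∈ Set.Icc (u.lo 0) (u.hi 0) | ¬ ContinuousAt u.u x}.Finite) :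
    ∃ v : ℕ → FuzzyNumber, ∃ W : ℕ → FuzzyNumber,
      (∀ n, (v n).IsDifferentiable) ∧
      (∀ n, (W n).u = conv u.u (v n).u ∧ (W n).IsDifferentiable) ∧
      Filter.Tendsto (fun n => dInf (W n) u) Filter.atTop (nhds 0) :=
  stmt18_general u
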